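/- Let G be a finite group satisfying Condition (4), and assume that G is not solvable. Then G is isomorphic to the alternating group A₅, the symmetric group S₅, or the alternating group A₆. -/

import Mathlib

/-- The character value of the small Mathieu representation at an element of the given order. -/
def mathieuCharValue : ℕ → ℂ
  | 1 => 12
  | 2 => 4
  | 3 => 3
  | 4 => 4
  | 5 => 2
  | 6 => 1
  | 8 => 2
  | 11 => 1
  | _ => 0

/-- A representation is a small Mathieu representation if it is 12-dimensional, every group
element has order in {1,2,3,4,5,6,8,11}, and the character at `g` depends only on the order
of `g`, with the values of the permutation character of `M₁₁` acting on 12 points. -/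
def IsSmallMathieuRep {G : Type*} [Group G] {V : Type*} [AddCommGroup V] [Module ℂ V]
    (ρ : Representation ℂ G V) : Prop :=
  Module.finrank ℂ V = 12 ∧
    (∀ g : G, orderOf g ∈ ({1, 2, 3, 4, 5, 6, 8, 11} : Set ℕ)) ∧
    (∀ g : G, LinearMap.trace ℂ V (ρ g) = mathieuCharValue (orderOf g))

/-- `G` admits a small Mathieu representation. -/
def HasSmallMathieuRep (G : Type*) [Group G] : Prop :=
  ∃ (V : Type) (_ : AddCommGroup V) (_ : Module ℂ V) (ρ : Representation ℂ G V),
    IsSmallMathieuRep ρ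

/-- `G` admits a small Mathieu representation whose invariant subspace has dimension ≥ 3. -/
def HasSmallMathieuRep3 (G : Type*) [Group G] : Prop :=
  ∃ (V : Type) (_ : AddCommGroup V) (_ : Module ℂ V) (ρ : Representation ℂ G V),
    IsSmallMathieuRep ρ ∧ 3 ≤ Module.finrank ℂ ρ.invariants

/-- Condition (4): `G` has a small Mathieu representation `V` with `dim V^G ≥ 3`, the 2-Sylow
subgroups of `G` embed into `S₆`, and `G` is not isomorphic to the dicyclic group `Q₁₂`
(realized in Mathlib as `QuaternionGroup 3`). -/
def Condition4 (G : Type*) [Group G] [Fintype G] : Prop :=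
  HasSmallMathieuRep3 G ∧
    (∀ P : Sylow 2 G, ∃ f : P →* Equiv.Perm (Fin 6), Function.Injective f) ∧
    IsEmpty (G ≃* QuaternionGroup 3)

/-
Restricting `V` to a subgroup `H` whose nontrivial elements all have character value `k` gives
`12 + (|H| - 1) k = |H| dim V^H`. For `|H| = 11` this makes `dim V^H = 2 < dim V^G`, and it bounds
the `p`-subgroups by congruences modulo `|H|`; as `S₆` has no element of order `8`, elements of `G`
have order at most `6` and `|G|` divides `360`. Counting Sylow `5`-subgroups, which are
self-centralizing, a nonsolvable `G` has either `n₅ = 6` and `|G| ∈ {60, 120}`, when the action on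
the Sylow `5`-subgroups leads to `A₅` or `S₅`, or `n₅ = 36` and `|G| = 360`. In the last case `G` is
simple and acts on its ten Sylow `3`-subgroups, and these can be identified with the projective line
over `𝔽₉`: one Sylow subgroup acts by translations, an element of order `4` fixing two points acts
as multiplication by `i`, and an element exchanging these two points is then forced to be
`z ↦ 1 / z` up to powers of `i`. So all such groups are isomorphic to the same permutation group,
and `A₆` is one of them.
-/

namespace SmallMathieu

section Representation

open Representation

variable {G V : Type*} [Group G] [AddCommGroup V] [Module ℂ V] {ρ : Representation ℂ G V}

theorem twelve_add_card_mul_eq [Finite G] (hρ : IsSmallMathieuRep ρ) (H : Subgroup G) {k : ℕ}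
    (hk : ∀ h : H, h ≠ 1 → mathieuCharValue (orderOf h) = k) :
    12 + Nat.card H * k =
      Nat.card H * Module.finrank ℂ (invariants (ρ.comp H.subtype)) + k := by
  classical
  have := Fintype.ofFinite H
  have : Module.Finite ℂ V := Module.finite_of_finrank_pos (by rw [hρ.1]; norm_num)
  have hH : (Nat.card H : ℂ) ≠ 0 := Nat.cast_ne_zero.2 Nat.card_pos.ne'
  have : Invertible (Nat.card H : ℂ) := invertibleOfNonzero hH
  have hchar : ∀ h : H, character (ρ.comp H.subtype) h = k + if h = 1 then (12 - k : ℂ) else 0 := by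
    intro h
    have hh : character (ρ.comp H.subtype) h = mathieuCharValue (orderOf h) := by
      rw [← Subgroup.orderOf_coe]
      exact hρ.2.2 h
    split_ifs with h1
    · rw [hh, h1, orderOf_one, add_sub_cancel]
      rfl
    · rw [hh, hk h h1, add_zero]
  have hsum := card_inv_mul_sum_char_eq_finrank (ρ.comp H.subtype)
  simp only [hchar, Finset.sum_add_distrib, Finset.sum_const, Finset.card_univ,
    Finset.sum_ite_eq', Finset.mem_univ, if_true, ← Nat.card_eq_fintype_card] at hsum
  rw [inv_mul_eq_iff_eq_mul₀ hH, nsmul_eq_mul] at hsum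
  have : (12 + Nat.card H * k : ℂ) =
      Nat.card H * Module.finrank ℂ (invariants (ρ.comp H.subtype)) + k := by
    rw [← hsum]
    ring
  exact_mod_cast this

theorem orderOf_ne_eleven [Finite G] (hρ : IsSmallMathieuRep ρ)
    (hinv : 3 ≤ Module.finrank ℂ ρ.invariants) (g : G) : orderOf g ≠ 11 := by
  intro hg
  have : Module.Finite ℂ V := Module.finite_of_finrank_pos (by rw [hρ.1]; norm_num)
  have hcard : Nat.card (Subgroup.zpowers g) = 11 := by rw [Nat.card_zpowers, hg]
  have hchar (h : Subgroup.zpowers g) (h1 : h ≠ 1) :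
      mathieuCharValue (orderOf h) = (1 : ℕ) := by
    have hdvd : orderOf h ∣ 11 := hcard ▸ orderOf_dvd_natCard h
    have h11 : orderOf h = 11 := ((Nat.dvd_prime (by norm_num)).1 hdvd).resolve_left
      fun h => h1 (orderOf_eq_one_iff.1 h)
    rw [h11]
    simp only [mathieuCharValue, Nat.cast_one]
  have hle : ρ.invariants ≤ invariants (ρ.comp (Subgroup.zpowers g).subtype) :=
    fun v hv h => hv h
  have hmono := hinv.trans (Submodule.finrank_mono hle)
  have hsum := twelve_add_card_mul_eq hρ _ hchar
  rw [hcard] at hsum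
  omega

theorem not_prime_pow_dvd_card [Finite G] (hρ : IsSmallMathieuRep ρ)
    (hord : ∀ g : G, orderOf g ≤ 6) {p n k : ℕ} (hp : p.Prime)
    (hk : ∀ j ≤ 6, j ∣ p ^ n → j ≠ 1 → mathieuCharValue j = k)
    (hmod : ¬ 12 ≡ k [MOD p ^ n]) : ¬ p ^ n ∣ Nat.card G := by
  intro hdvd
  have := Fact.mk hp
  obtain ⟨H, hH⟩ := Sylow.exists_subgroup_card_pow_prime p hdvd
  have hchar (h : H) (h1 : h ≠ 1) : mathieuCharValue (orderOf h) = k :=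
    hk _ (Subgroup.orderOf_coe h ▸ hord h) (hH ▸ orderOf_dvd_natCard h)
      fun h => h1 (orderOf_eq_one_iff.1 h)
  have hsum := twelve_add_card_mul_eq hρ H hchar
  rw [hH] at hsum
  have := congrArg (· % p ^ n) hsum
  simp only [Nat.add_mul_mod_self_left, Nat.mul_add_mod_self_left] at this
  exact hmod this

end Representation

theorem orderOf_perm_fin_six_le (s : Equiv.Perm (Fin 6)) : orderOf s ≤ 6 := by
  have hpow : ∀ s : Equiv.Perm (Fin 6), s ^ 4 = 1 ∨ s ^ 5 = 1 ∨ s ^ 6 = 1 := by decide +kernel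
  rcases hpow s with h | h | h
  · exact (orderOf_le_of_pow_eq_one (by omega) h).trans (by omega)
  · exact (orderOf_le_of_pow_eq_one (by omega) h).trans (by omega)
  · exact orderOf_le_of_pow_eq_one (by omega) h

theorem orderOf_ne_eight_of_sylow_embeds {G : Type*} [Group G]
    (hS : ∀ P : Sylow 2 G, ∃ f : P →* Equiv.Perm (Fin 6), Function.Injective f) (g : G) :
    orderOf g ≠ 8 := by
  intro hg
  have hp : IsPGroup 2 (Subgroup.zpowers g) :=
    IsPGroup.of_card (n := 3) (by rw [Nat.card_zpowers, hg]; norm_num)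
  obtain ⟨P, hP⟩ := hp.exists_le_sylow
  obtain ⟨f, hf⟩ := hS P
  let x : P := ⟨g, hP (Subgroup.mem_zpowers g)⟩
  have hx : orderOf (f x) = 8 := by
    rw [orderOf_injective f hf, ← hg]
    exact (Subgroup.orderOf_coe x).symm
  have hle := orderOf_perm_fin_six_le (f x)
  omega

theorem dvd_three_hundred_sixty {n : ℕ} (hp : ∀ p, p.Prime → p ∣ n → p ≤ 5)
    (h16 : ¬ 2 ^ 4 ∣ n) (h27 : ¬ 3 ^ 3 ∣ n) (h25 : ¬ 5 ^ 2 ∣ n) : n ∣ 360 := by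
  have hexp {p m k : ℕ} (hm : ¬ p ^ (m + 1) ∣ n) (hk : p ^ k ∣ n) : k ≤ m := by
    by_contra! h
    exact hm ((pow_dvd_pow p h).trans hk)
  refine (Nat.dvd_iff_prime_pow_dvd_dvd 360 n).2 fun p k hprime hk => ?_
  rcases k.eq_zero_or_pos with rfl | hpos
  · exact one_dvd _
  have h5 := hp p hprime ((dvd_pow_self p hpos.ne').trans hk)
  have h2 := hprime.two_le
  interval_cases p
  · exact (pow_dvd_pow 2 (hexp h16 hk)).trans (by norm_num)
  · exact (pow_dvd_pow 3 (hexp h27 hk)).trans (by norm_num)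
  · exact absurd hprime (by norm_num)
  · exact (pow_dvd_pow 5 (hexp h25 hk)).trans (by norm_num)

/-- What Condition (4) says about the orders of `G` and of its elements. -/
structure IsMathieuBounded (G : Type*) [Group G] : Prop where
  orderOf_le_six (g : G) : orderOf g ≤ 6
  card_dvd : Nat.card G ∣ 360

theorem isMathieuBounded_of_condition4 {G : Type*} [Group G] [Fintype G] (h : Condition4 G) :
    IsMathieuBounded G := by
  obtain ⟨⟨V, _, _, ρ, hρ, hinv⟩, hS, -⟩ := h
  have hord (g : G) : orderOf g ≤ 6 := by
    have hmem := hρ.2.1 g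
    have h8 := orderOf_ne_eight_of_sylow_embeds hS g
    have h11 := orderOf_ne_eleven hρ hinv g
    simp only [Set.mem_insert_iff, Set.mem_singleton_iff] at hmem
    omega
  refine ⟨hord, dvd_three_hundred_sixty (fun p hp hdvd => ?_) ?_ ?_ ?_⟩
  · have := Fact.mk hp
    obtain ⟨g, hg⟩ := exists_prime_orderOf_dvd_card' p hdvd
    have h6 := hord g
    have hne : p ≠ 6 := fun h => by norm_num [h] at hp
    omega
  · refine not_prime_pow_dvd_card (k := 4) hρ hord Nat.prime_two (fun j hj hdvd h1 => ?_)
      (by decide)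
    interval_cases j <;> simp_all [mathieuCharValue]
  · refine not_prime_pow_dvd_card (k := 3) hρ hord Nat.prime_three (fun j hj hdvd h1 => ?_)
      (by decide)
    interval_cases j <;> simp_all [mathieuCharValue]
  · refine not_prime_pow_dvd_card (k := 2) hρ hord Nat.prime_five (fun j hj hdvd h1 => ?_)
      (by decide)
    interval_cases j <;> simp_all [mathieuCharValue]

section Sylow

variable {G : Type*} [Group G] {p : ℕ}

theorem card_sylow_eq_pow [Finite G] [hp : Fact p.Prime] {n : ℕ} (P : Sylow p G)
    (hdvd : p ^ n ∣ Nat.card G) (hndvd : ¬ p ^ (n + 1) ∣ Nat.card G) : Nat.card P = p ^ n := by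
  rw [P.card_eq_multiplicity, Nat.factorization_def _ hp.out]
  rw [padicValNat_dvd_iff_le Nat.card_pos.ne'] at hdvd hndvd
  rw [le_antisymm (by omega) hdvd]

theorem ker_toPermHom_sylow_le_normalizer (P : Sylow p G) :
    (MulAction.toPermHom G (Sylow p G)).ker ≤ Subgroup.normalizer (P : Set G) :=
  fun _ hg => Sylow.smul_eq_iff_mem_normalizer.1 (DFunLike.congr_fun hg P)

theorem exists_normal_card_mul_card_eq [Finite G] [Fact p.Prime] (P : Sylow p G)
    [IsMulCommutative P] (hP : Nat.card (Sylow p G) * Nat.card P = Nat.card G) :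
    ∃ K : Subgroup G, K.Normal ∧ ¬ p ∣ Nat.card K ∧ Nat.card K * Nat.card P = Nat.card G := by
  have hN : Nat.card (Subgroup.normalizer (P : Set G)) = Nat.card P := by
    rw [P.card_eq_index_normalizer,
      ← (Subgroup.normalizer (P : Set G)).card_mul_index, mul_comm] at hP
    exact (Nat.eq_of_mul_eq_mul_right (Nat.pos_of_ne_zero Subgroup.index_ne_zero_of_finite) hP).symm
  have hNP : (P : Subgroup G) = Subgroup.normalizer (P : Set G) :=
    Subgroup.eq_of_le_of_card_ge Subgroup.le_normalizer hN.le
  have hC : Subgroup.normalizer (P : Set G) ≤ Subgroup.centralizer (P : Set G) :=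
    hNP ▸ (P : Subgroup G).le_centralizer
  exact ⟨(MonoidHom.transferSylow P hC).ker, inferInstance,
    MonoidHom.not_dvd_card_ker_transferSylow P hC,
    (MonoidHom.ker_transferSylow_isComplement' P hC).card_mul_card⟩

theorem card_sylow_le_of_normal [Finite G] [hp : Fact p.Prime] (K : Subgroup G) [K.Normal]
    (hK : ¬ p ∣ K.index) : Nat.card (Sylow p G) ≤ Nat.card (Sylow p K) := by
  have hle (P : Sylow p G) : (P : Subgroup G) ≤ K := by
    obtain ⟨n, hn⟩ := (IsPGroup.iff_card (p := p)).1 P.isPGroup'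
    have hcop : (Nat.card P).Coprime K.index :=
      hn ▸ Nat.Coprime.pow_left n ((hp.out.coprime_iff_not_dvd).2 hK)
    exact Subgroup.relIndex_eq_one.1 (Nat.eq_one_of_dvd_coprimes hcop
      (Subgroup.relIndex_dvd_card K P) (Subgroup.relIndex_dvd_index_of_normal K P))
  refine Nat.card_le_card_of_injective (fun P => P.subtype (hle P)) fun P Q h => ?_
  exact Sylow.subtype_injective h

theorem card_normalizer_dvd [Finite G] (H : Subgroup G) [IsCyclic H] :
    Nat.card (Subgroup.normalizer (H : Set G)) ∣
      Nat.card (Subgroup.centralizer (H : Set G)) * (Nat.card H).totient := by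
  have hker : Nat.card H.normalizerMonoidHom.ker =
      Nat.card (Subgroup.centralizer (H : Set G)) := by
    rw [Subgroup.normalizerMonoidHom_ker]
    exact Nat.card_congr
      (Subgroup.subgroupOfEquivOfLe (Subgroup.centralizer_le_normalizer (H : Set G))).toEquiv
  rw [← hker, ← H.normalizerMonoidHom.ker.card_mul_index, ← IsCyclic.card_mulAut]
  refine mul_dvd_mul_left _ ?_
  rw [Subgroup.index_ker]
  exact Subgroup.card_subgroup_dvd_card _

end Sylow

section IsolatedPrime

variable {G : Type*} [Group G] {p : ℕ} [hp : Fact p.Prime]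

theorem eq_one_of_commute (hiso : ∀ g : G, p ∣ orderOf g → orderOf g = p) {x g : G}
    (hx : orderOf x = p) (hxg : Commute x g) (hg : ¬ p ∣ orderOf g) : g = 1 := by
  have hcop : (orderOf x).Coprime (orderOf g) := hx ▸ (hp.out.coprime_iff_not_dvd).2 hg
  have hmul := hxg.orderOf_mul_eq_mul_orderOf_of_coprime hcop
  rw [hx] at hmul
  rw [hiso _ (hmul ▸ dvd_mul_right p _)] at hmul
  exact orderOf_eq_one_iff.1 (Nat.eq_of_mul_eq_mul_left hp.out.pos (by rw [← hmul, mul_one]))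

theorem card_modEq_one_of_mem_normalizer (hiso : ∀ g : G, p ∣ orderOf g → orderOf g = p) {x : G}
    (hx : orderOf x = p) (Q : Subgroup G) [Finite Q]
    (hxQ : x ∈ Subgroup.normalizer (Q : Set G)) (hpQ : ¬ p ∣ Nat.card Q) :
    Nat.card Q ≡ 1 [MOD p] := by
  have hle : Subgroup.zpowers x ≤ Subgroup.normalizer (Q : Set G) := by
    rwa [Subgroup.zpowers_le]
  let _ : MulAction (Subgroup.zpowers x) Q :=
    MulAction.compHom Q (Q.normalizerMonoidHom.comp (Subgroup.inclusion hle))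
  have hpx : IsPGroup p (Subgroup.zpowers x) :=
    IsPGroup.of_card (n := 1) (by rw [Nat.card_zpowers, hx, pow_one])
  have hfixed (q : Q) (hq : q ∈ MulAction.fixedPoints (Subgroup.zpowers x) Q) : q = 1 := by
    have hconj : x * (q : G) * x⁻¹ = q := congrArg Subtype.val (hq ⟨x, Subgroup.mem_zpowers x⟩)
    refine Subtype.ext (eq_one_of_commute hiso hx (mul_inv_eq_iff_eq_mul.1 hconj) fun hdvd => ?_)
    exact hpQ ((Subgroup.orderOf_coe q ▸ hdvd).trans (orderOf_dvd_natCard q))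
  have hone : (1 : Q) ∈ MulAction.fixedPoints (Subgroup.zpowers x) Q := fun g =>
    map_one (Q.normalizerMonoidHom (Subgroup.inclusion hle g))
  have hcard : Nat.card (MulAction.fixedPoints (Subgroup.zpowers x) Q) = 1 :=
    Nat.card_eq_one_iff_exists.2 ⟨⟨1, hone⟩, fun q => Subtype.ext (hfixed q q.2)⟩
  exact hcard ▸ hpx.card_modEq_card_fixedPoints Q

-- By the Frattini argument some element of order `p` normalizes a Sylow subgroup of `K`.
theorem card_sylow_modEq_one_of_normal [Finite G]
    (hiso : ∀ g : G, p ∣ orderOf g → orderOf g = p) (hpG : p ∣ Nat.card G) (K : Subgroup G)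
    [K.Normal] (hpK : ¬ p ∣ Nat.card K) {q : ℕ} [Fact q.Prime] (S : Sylow q K) :
    Nat.card S ≡ 1 [MOD p] := by
  set Q : Subgroup G := (S : Subgroup K).map K.subtype with hQ
  have hQS : Nat.card Q = Nat.card S := Subgroup.card_map_of_injective K.subtype_injective
  have hindex : K.relIndex (Subgroup.normalizer (Q : Set G)) = K.index := by
    rw [← Subgroup.relIndex_sup_left, sup_comm, S.normalizer_sup_eq_top,
      Subgroup.relIndex_top_right]
  have hpN : p ∣ Nat.card (Subgroup.normalizer (Q : Set G)) := by
    rw [← K.card_mul_index, ← hindex] at hpG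
    exact ((hp.out.dvd_mul.1 hpG).resolve_left hpK).trans (Subgroup.relIndex_dvd_card _ _)
  obtain ⟨x, hx⟩ := exists_prime_orderOf_dvd_card' p hpN
  rw [← hQS]
  refine card_modEq_one_of_mem_normalizer hiso (by rwa [Subgroup.orderOf_coe]) Q x.2 fun h => ?_
  exact hpK ((hQS ▸ h).trans (S : Subgroup K).card_subgroup_dvd_card)

theorem centralizer_sylow_le [Finite G] (hiso : ∀ g : G, p ∣ orderOf g → orderOf g = p)
    (hpG : p ∣ Nat.card G) (P : Sylow p G) : Subgroup.centralizer (P : Set G) ≤ P := by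
  obtain ⟨x, hx⟩ := exists_prime_orderOf_dvd_card' (G := P) p (P.dvd_card_of_dvd_card hpG)
  have hpC : IsPGroup p (Subgroup.centralizer (P : Set G)) := by
    refine fun y => ⟨1, orderOf_dvd_iff_pow_eq_one.1 ?_⟩
    rw [pow_one, ← Subgroup.orderOf_coe]
    by_cases hy : p ∣ orderOf (y : G)
    · rw [hiso y hy]
    · rw [eq_one_of_commute hiso (x := (x : G)) (by rwa [Subgroup.orderOf_coe])
        (y.2 x x.2) hy, orderOf_one]
      exact one_dvd p
  rw [← inf_eq_left, ← hpC.inf_normalizer_sylow P, inf_eq_left]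
  exact Subgroup.centralizer_le_normalizer (P : Set G)

end IsolatedPrime

section Solvable

variable {G : Type*} [Group G]

theorem isSolvable_of_card_dvd_prime_pow [Finite G] {p n : ℕ} (hp : p.Prime)
    (h : Nat.card G ∣ p ^ n) : Group.IsSolvable G := by
  have := Fact.mk hp
  obtain ⟨k, -, hk⟩ := (Nat.dvd_prime_pow hp).1 h
  have := (IsPGroup.of_card hk).isNilpotent
  infer_instance

theorem isSolvable_of_card_dvd_of_index_dvd [Finite G] (K : Subgroup G) [K.Normal] {p q m n : ℕ}
    (hp : p.Prime) (hq : q.Prime) (hK : Nat.card K ∣ p ^ m) (hindex : K.index ∣ q ^ n) :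
    Group.IsSolvable G :=
  (Group.isSolvable_iff_subgroup_quotient K).2
    ⟨isSolvable_of_card_dvd_prime_pow hp hK, isSolvable_of_card_dvd_prime_pow hq hindex⟩

theorem isSolvable_perm_fin_four : Group.IsSolvable (Equiv.Perm (Fin 4)) := by
  have hcard : Nat.card (Fin 4) = 4 := Nat.card_fin 4
  have hA : Group.IsSolvable (alternatingGroup (Fin 4)) := by
    have := alternatingGroup.normal_kleinFour hcard
    have hK := alternatingGroup.kleinFour_card_of_card_eq_four hcard
    have hindex := (alternatingGroup.kleinFour (Fin 4)).card_mul_index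
    rw [hK, alternatingGroup.card_of_card_eq_four hcard] at hindex
    exact isSolvable_of_card_dvd_of_index_dvd (alternatingGroup.kleinFour (Fin 4)) (m := 2)
      (n := 1) Nat.prime_two Nat.prime_three (by rw [hK]; norm_num) ⟨1, by omega⟩
  refine (Group.isSolvable_iff_subgroup_quotient (alternatingGroup (Fin 4))).2 ⟨hA, ?_⟩
  refine isSolvable_of_card_dvd_prime_pow (n := 1) Nat.prime_two ?_
  rw [pow_one, ← alternatingGroup.index_eq_two (α := Fin 4)]
  rfl

theorem isSolvable_perm_of_card_le_four {α : Type*} [Finite α] (h : Nat.card α ≤ 4) :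
    Group.IsSolvable (Equiv.Perm α) := by
  have := Fintype.ofFinite α
  obtain ⟨e⟩ : Nonempty (α ↪ Fin 4) :=
    Function.Embedding.nonempty_of_card_le (by simpa [Nat.card_eq_fintype_card] using h)
  have := isSolvable_perm_fin_four
  exact Group.isSolvable_of_isSolvable_injective (Equiv.Perm.viaEmbeddingHom_injective e)

theorem isSolvable_normalizer_sylow [Finite G] {p q n : ℕ} [hp : Fact p.Prime] (hq : q.Prime)
    (P : Sylow p G) (h : (P : Subgroup G).index ∣ q ^ n) :
    Group.IsSolvable (Subgroup.normalizer (P : Set G)) := by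
  have hle : (P : Subgroup G) ≤ Subgroup.normalizer (P : Set G) := Subgroup.le_normalizer
  have : ((P : Subgroup G).subgroupOf (Subgroup.normalizer (P : Set G))).Normal :=
    Subgroup.normal_in_normalizer
  obtain ⟨k, hk⟩ := (IsPGroup.iff_card (p := p)).1 P.isPGroup'
  refine isSolvable_of_card_dvd_of_index_dvd
    ((P : Subgroup G).subgroupOf (Subgroup.normalizer (P : Set G))) hp.out hq (m := k) ?_
    ((Subgroup.relIndex_dvd_index_of_le hle).trans h)
  rw [Nat.card_congr (Subgroup.subgroupOfEquivOfLe hle).toEquiv, hk]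

theorem isSolvable_of_card_dvd_eight_mul_three_pow [Finite G] {n : ℕ}
    (h : Nat.card G ∣ 8 * 3 ^ n) : Group.IsSolvable G := by
  have : Fact (Nat.Prime 3) := ⟨Nat.prime_three⟩
  obtain ⟨S⟩ : Nonempty (Sylow 3 G) := inferInstance
  have hindex : (S : Subgroup G).index ∣ 2 ^ 3 := by
    have hcop : Nat.Coprime (S : Subgroup G).index (3 ^ n) :=
      ((Nat.Prime.coprime_iff_not_dvd Nat.prime_three).2 S.not_dvd_index).symm.pow_right n
    exact hcop.dvd_of_dvd_mul_right ((Subgroup.index_dvd_card _).trans h)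
  have hle : Nat.card (Sylow 3 G) ≤ 4 := by
    obtain ⟨k, hk, hcard⟩ := (Nat.dvd_prime_pow Nat.prime_two).1 (S.card_dvd_index.trans hindex)
    have hmod : Nat.card (Sylow 3 G) ≡ 1 [MOD 3] := card_sylow_modEq_one 3 G
    rw [hcard] at hmod ⊢
    interval_cases k <;> simp_all [Nat.ModEq]
  have := isSolvable_perm_of_card_le_four hle
  have := isSolvable_normalizer_sylow Nat.prime_two S hindex
  refine (Group.isSolvable_iff_subgroup_quotient (MulAction.toPermHom G (Sylow 3 G)).ker).2 ⟨?_, ?_⟩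
  · exact Group.isSolvable_of_isSolvable_injective
      (Subgroup.inclusion_injective (ker_toPermHom_sylow_le_normalizer S))
  · exact Group.isSolvable_of_isSolvable_injective (QuotientGroup.kerLift_injective _)

end Solvable

section Perm

variable {G X : Type*} [Group G] [Group X]

theorem exists_injective_perm_of_ker_eq_bot {α : Type*} [Finite α] [MulAction G α] {n : ℕ}
    (hker : (MulAction.toPermHom G α).ker = ⊥) (hα : Nat.card α = n) :
    ∃ f : G →* Equiv.Perm (Fin n), Function.Injective f := by
  let e : α ≃ Fin n := Finite.equivFinOfCardEq hα
  exact ⟨e.permCongrHom.toMonoidHom.comp (MulAction.toPermHom G α),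
    e.permCongrHom.injective.comp ((MonoidHom.ker_eq_bot_iff _).1 hker)⟩

theorem exists_injective_perm_stabilizer {α : Type*} [Finite α] [MulAction G α]
    (hker : (MulAction.toPermHom G α).ker = ⊥) (a : α) {n : ℕ} (hα : Nat.card α = n + 1) :
    ∃ f : MulAction.stabilizer G a →* Equiv.Perm (Fin n), Function.Injective f := by
  refine exists_injective_perm_of_ker_eq_bot (α := SubMulAction.ofStabilizer G a) ?_ ?_
  · refine (Subgroup.eq_bot_iff_forall _).2 fun g hg => Subtype.ext ?_
    rw [Subgroup.coe_one, ← Subgroup.mem_bot, ← hker]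
    ext q
    by_cases hq : q = a
    · exact hq ▸ g.2
    · exact congrArg Subtype.val (DFunLike.congr_fun hg ⟨q, hq⟩)
  · have hcard := SubMulAction.nat_card_ofStabilizer_add_one_eq (G := G) a
    omega

theorem exists_injective_perm_of_index_eq_succ {f : G →* X} (hf : Function.Injective f) {n : ℕ}
    (hindex : f.range.index = n + 1) (hcore : f.range.normalCore = ⊥) :
    ∃ f : G →* Equiv.Perm (Fin n), Function.Injective f := by
  have : f.range.FiniteIndex := ⟨by omega⟩
  obtain ⟨i, hi⟩ := exists_injective_perm_stabilizer
    (f.range.normalCore_eq_ker ▸ hcore) ((1 : X) : X ⧸ f.range) hindex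
  let e := (MonoidHom.ofInjective hf).trans
    (MulEquiv.subgroupCongr (MulAction.stabilizer_quotient f.range).symm)
  exact ⟨i.comp e.toMonoidHom, hi.comp e.injective⟩

theorem nonempty_mulEquiv_alternatingGroup [Finite G] {n : ℕ} {f : G →* Equiv.Perm (Fin n)}
    (hf : Function.Injective f) (hcard : 2 * Nat.card G = n.factorial) :
    Nonempty (G ≃* alternatingGroup (Fin n)) := by
  have hrange : Nat.card f.range = Nat.card G := Nat.card_range_of_injective hf
  have hmul := f.range.card_mul_index
  rw [hrange, Nat.card_perm, Nat.card_fin, ← hcard, mul_comm 2] at hmul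
  have hindex : f.range.index = 2 := Nat.eq_of_mul_eq_mul_left Nat.card_pos hmul
  exact ⟨(MonoidHom.ofInjective hf).trans
    (MulEquiv.subgroupCongr (Equiv.Perm.eq_alternatingGroup_of_index_eq_two hindex))⟩

theorem eq_one_of_isSimpleGroup [IsSimpleGroup G] [Finite X] (hcard : Nat.card X < Nat.card G)
    (f : G →* X) : f = 1 := by
  refine MonoidHom.ker_eq_top_iff.1 ?_
  refine (IsSimpleGroup.eq_bot_or_eq_top_of_normal f.ker inferInstance).resolve_left fun hker => ?_
  have hf := (MonoidHom.ker_eq_bot_iff f).1 hker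
  exact (Nat.card_le_card_of_injective f hf).not_gt hcard

end Perm

/-! ### Sylow `5`-subgroups and the orders `60` and `120` -/

instance fact_prime_five : Fact (Nat.Prime 5) := ⟨Nat.prime_five⟩

theorem card_alternatingGroup_six : Nat.card (alternatingGroup (Fin 6)) = 360 := by
  rw [nat_card_alternatingGroup, Nat.card_fin]
  rfl

namespace IsMathieuBounded

variable {G : Type*} [Group G]

theorem subgroup (hG : IsMathieuBounded G) (K : Subgroup G) : IsMathieuBounded K where
  orderOf_le_six g := Subgroup.orderOf_coe g ▸ hG.orderOf_le_six g
  card_dvd := K.card_subgroup_dvd_card.trans hG.card_dvd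

theorem card_dvd_seventy_two (hG : IsMathieuBounded G) (h5 : ¬ 5 ∣ Nat.card G) :
    Nat.card G ∣ 72 :=
  ((Nat.prime_five.coprime_iff_not_dvd).2 h5).symm.dvd_of_dvd_mul_right (m := 72) (n := 5)
    hG.card_dvd

variable [Finite G]

theorem orderOf_eq_five (hG : IsMathieuBounded G) (g : G) (h : 5 ∣ orderOf g) :
    orderOf g = 5 := by
  have hle := hG.orderOf_le_six g
  have hpos := orderOf_pos g
  omega

theorem card_sylow_five (hG : IsMathieuBounded G) (h5 : 5 ∣ Nat.card G) (P : Sylow 5 G) :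
    Nat.card P = 5 :=
  card_sylow_eq_pow (n := 1) P h5 fun h => absurd (h.trans hG.card_dvd) (by norm_num)

theorem eq_bot_of_normal (hG : IsMathieuBounded G) (h5 : 5 ∣ Nat.card G) (K : Subgroup G)
    [K.Normal] (hK : ¬ 5 ∣ Nat.card K) : K = ⊥ := by
  rw [← Subgroup.card_eq_one, Nat.eq_one_iff_not_exists_prime_dvd]
  intro q hq hqK
  have := Fact.mk hq
  obtain ⟨S⟩ : Nonempty (Sylow q K) := inferInstance
  have hmod := card_sylow_modEq_one_of_normal hG.orderOf_eq_five h5 K hK S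
  have hdvd : Nat.card S ∣ 72 :=
    (S : Subgroup K).card_subgroup_dvd_card.trans ((hG.subgroup K).card_dvd_seventy_two hK)
  have hqS := S.dvd_card_of_dvd_card hqK
  obtain ⟨n, hn⟩ := (IsPGroup.iff_card (p := q)).1 S.isPGroup'
  have hcases : ∀ m ∈ Nat.divisors 72, m ≡ 1 [MOD 5] → m = 1 ∨ 2 ∣ m ∧ 3 ∣ m := by decide
  rcases hcases _ (Nat.mem_divisors.2 ⟨hdvd, by norm_num⟩) hmod with h | ⟨h2, h3⟩
  · exact hq.one_lt.ne' (Nat.dvd_one.1 (h ▸ hqS))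
  · rw [hn] at h2 h3
    have h2 := (Nat.prime_dvd_prime_iff_eq Nat.prime_two hq).1 (Nat.prime_two.dvd_of_dvd_pow h2)
    have h3 := (Nat.prime_dvd_prime_iff_eq Nat.prime_three hq).1
      (Nat.prime_three.dvd_of_dvd_pow h3)
    omega

theorem card_normalizer_dvd_twenty (hG : IsMathieuBounded G) (h5 : 5 ∣ Nat.card G)
    (P : Sylow 5 G) : Nat.card (Subgroup.normalizer (P : Set G)) ∣ 20 := by
  have hP := hG.card_sylow_five h5 P
  have : IsCyclic P := isCyclic_of_prime_card hP
  have hC := Subgroup.card_dvd_of_le (centralizer_sylow_le hG.orderOf_eq_five h5 P)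
  have hN := (card_normalizer_dvd (P : Subgroup G)).trans (Nat.mul_dvd_mul_right hC _)
  rw [hP] at hN
  exact hN

theorem card_eq_five (hG : IsMathieuBounded G) (h5 : 5 ∣ Nat.card G)
    (hn : Nat.card (Sylow 5 G) * 5 = Nat.card G) : Nat.card G = 5 := by
  obtain ⟨P⟩ : Nonempty (Sylow 5 G) := inferInstance
  have hP := hG.card_sylow_five h5 P
  have : IsCyclic P := isCyclic_of_prime_card hP
  have : IsMulCommutative P := IsCyclic.isMulCommutative
  obtain ⟨K, hK, h5K, hcard⟩ := exists_normal_card_mul_card_eq P (by rwa [hP])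
  rw [hG.eq_bot_of_normal h5 K h5K, Subgroup.card_bot, one_mul] at hcard
  exact hcard ▸ hP

theorem card_sylow_five_cases (hG : IsMathieuBounded G) (h5 : 5 ∣ Nat.card G) :
    (Nat.card (Sylow 5 G) = 1 ∧ Nat.card G ∣ 20) ∨
      (Nat.card (Sylow 5 G) = 6 ∧ (Nat.card G = 60 ∨ Nat.card G = 120)) ∨
      (Nat.card (Sylow 5 G) = 36 ∧ Nat.card G = 360) := by
  obtain ⟨P⟩ : Nonempty (Sylow 5 G) := inferInstance
  have hmod : Nat.card (Sylow 5 G) ≡ 1 [MOD 5] := card_sylow_modEq_one 5 G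
  have hN := hG.card_normalizer_dvd_twenty h5 P
  have h5N : 5 ∣ Nat.card (Subgroup.normalizer (P : Set G)) :=
    (P.dvd_card_of_dvd_card h5).trans (Subgroup.card_dvd_of_le Subgroup.le_normalizer)
  have hself := hG.card_eq_five h5
  have hmul := (Subgroup.normalizer (P : Set G)).card_mul_index
  rw [← P.card_eq_index_normalizer] at hmul
  have hdvd := hG.card_dvd
  have harith : ∀ m ∈ Nat.divisors 20, ∀ n ∈ Nat.divisors 360, 5 ∣ m → n ≡ 1 [MOD 5] →
      m * n ∣ 360 → (n * 5 = m * n → m * n = 5) → (n = 1 ∧ m * n ∣ 20) ∨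
        (n = 6 ∧ (m * n = 60 ∨ m * n = 120)) ∨ (n = 36 ∧ m * n = 360) := by decide
  rw [← hmul] at hdvd hself ⊢
  exact harith _ (Nat.mem_divisors.2 ⟨hN, by norm_num⟩) _
    (Nat.mem_divisors.2 ⟨(dvd_mul_left _ _).trans hdvd, by norm_num⟩) h5N hmod hdvd hself

theorem five_dvd_card_of_normal (hG : IsMathieuBounded G) (h5 : 5 ∣ Nat.card G) (K : Subgroup G)
    [K.Normal] (hK : K ≠ ⊥) : 5 ∣ Nat.card K :=
  not_imp_comm.1 (hG.eq_bot_of_normal h5 K) hK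

theorem card_sylow_five_le (hG : IsMathieuBounded G) (K : Subgroup G) [K.Normal]
    (hK : 5 ∣ Nat.card K) : Nat.card (Sylow 5 G) ≤ Nat.card (Sylow 5 K) := by
  refine card_sylow_le_of_normal K fun hindex => ?_
  have h25 := (mul_dvd_mul hK hindex).trans (K.card_mul_index ▸ hG.card_dvd)
  norm_num at h25

theorem isSimpleGroup (hG : IsMathieuBounded G)
    (hcard : Nat.card (Sylow 5 G) = 6 ∧ Nat.card G = 60 ∨
      Nat.card (Sylow 5 G) = 36 ∧ Nat.card G = 360) : IsSimpleGroup G where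
  exists_pair_ne := by
    have : 1 < Nat.card G := by omega
    exact (Finite.one_lt_card_iff_nontrivial.1 this).exists_pair_ne
  eq_bot_or_eq_top_of_normal K _ := by
    refine or_iff_not_imp_left.2 fun hK => K.eq_top_of_card_eq ?_
    have h5K := hG.five_dvd_card_of_normal (by omega) K hK
    have hle := hG.card_sylow_five_le K h5K
    have hcases := (hG.subgroup K).card_sylow_five_cases h5K
    have := K.card_le_card_group
    omega

theorem ker_toPermHom_sylow_five_eq_bot (hG : IsMathieuBounded G) (h5 : 5 ∣ Nat.card G)
    (hn : Nat.card (Sylow 5 G) = 6) : (MulAction.toPermHom G (Sylow 5 G)).ker = ⊥ := by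
  by_contra hK
  obtain ⟨P⟩ : Nonempty (Sylow 5 G) := inferInstance
  have h5K := hG.five_dvd_card_of_normal h5 _ hK
  have hle := hG.card_sylow_five_le _ h5K
  have hcases := (hG.subgroup _).card_sylow_five_cases h5K
  have hN := Nat.le_of_dvd (by norm_num) (hG.card_normalizer_dvd_twenty h5 P)
  have hKN := Subgroup.card_le_of_le (ker_toPermHom_sylow_le_normalizer P)
  omega

theorem nonempty_mulEquiv_alternatingGroup_five (hG : IsMathieuBounded G)
    (hn : Nat.card (Sylow 5 G) = 6) (hcard : Nat.card G = 60) :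
    Nonempty (G ≃* alternatingGroup (Fin 5)) := by
  have := hG.isSimpleGroup (.inl ⟨hn, hcard⟩)
  have hA6 : IsSimpleGroup (alternatingGroup (Fin 6)) := alternatingGroup.isSimpleGroup (by simp)
  obtain ⟨f, hf⟩ := exists_injective_perm_of_ker_eq_bot
    (hG.ker_toPermHom_sylow_five_eq_bot (by omega) hn) hn
  have hsign : Equiv.Perm.sign.comp f = 1 := eq_one_of_isSimpleGroup (by simp [hcard]) _
  let i : G →* alternatingGroup (Fin 6) := f.codRestrict _ fun g => DFunLike.congr_fun hsign g
  have hi : Function.Injective i := fun x y h => hf (congrArg Subtype.val h)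
  have hindex : i.range.index = 6 := by
    have hrange : Nat.card i.range = 60 := (Nat.card_range_of_injective hi).trans hcard
    have hmul := i.range.card_mul_index
    rw [hrange, card_alternatingGroup_six] at hmul
    omega
  have hcore : i.range.normalCore = ⊥ := by
    refine (hA6.eq_bot_or_eq_top_of_normal _ inferInstance).resolve_right fun htop => ?_
    rw [Subgroup.index_eq_one.2 (top_le_iff.1 (htop ▸ i.range.normalCore_le))] at hindex
    omega
  obtain ⟨j, hj⟩ := exists_injective_perm_of_index_eq_succ hi hindex hcore
  exact nonempty_mulEquiv_alternatingGroup hj (by rw [hcard]; rfl)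

theorem nonempty_mulEquiv_perm_five (hG : IsMathieuBounded G)
    (hn : Nat.card (Sylow 5 G) = 6) (hcard : Nat.card G = 120) :
    Nonempty (G ≃* Equiv.Perm (Fin 5)) := by
  obtain ⟨f, hf⟩ := exists_injective_perm_of_ker_eq_bot
    (hG.ker_toPermHom_sylow_five_eq_bot (by omega) hn) hn
  have hrange : Nat.card f.range = 120 := (Nat.card_range_of_injective hf).trans hcard
  have hindex : f.range.index = 6 := by
    have hmul := f.range.card_mul_index
    rw [hrange, Nat.card_perm, Nat.card_fin, show Nat.factorial 6 = 120 * 6 from rfl] at hmul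
    omega
  have hcore : f.range.normalCore = ⊥ := by
    by_contra hne
    have hle := Equiv.Perm.alternatingGroup_le_of_normal (by simp)
      ((Subgroup.nontrivial_iff_ne_bot _).2 hne)
    have hA := Subgroup.card_le_of_le (hle.trans f.range.normalCore_le)
    rw [hrange, card_alternatingGroup_six] at hA
    omega
  obtain ⟨j, hj⟩ := exists_injective_perm_of_index_eq_succ hf hindex hcore
  refine ⟨MulEquiv.ofBijective j ((Nat.bijective_iff_injective_and_card j).2 ⟨hj, ?_⟩)⟩
  rw [hcard, Nat.card_perm, Nat.card_fin]
  rfl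

end IsMathieuBounded

/-! ### Sylow `3`-subgroups in order `360` -/

theorem eq_top_of_factorial_index_lt {G : Type*} [Group G] [IsSimpleGroup G] [Finite G]
    (K : Subgroup G) (h : K.index.factorial < Nat.card G) : K = ⊤ := by
  have hone : MulAction.toPermHom G (G ⧸ K) = 1 :=
    eq_one_of_isSimpleGroup (by rwa [Nat.card_perm, ← Subgroup.index_eq_card]) _
  refine (Subgroup.eq_top_iff' K).2 fun g => ?_
  have hg : ((g : G) : G ⧸ K) = (1 : G) := by
    simpa using DFunLike.congr_fun (DFunLike.congr_fun hone g) ((1 : G) : G ⧸ K)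
  simpa using QuotientGroup.eq.1 hg.symm

theorem card_sylow_three_eq_nine {G : Type*} [Group G] [Finite G] (hcard : Nat.card G = 360)
    (P : Sylow 3 G) : Nat.card P = 9 :=
  card_sylow_eq_pow (n := 2) P (by rw [hcard]; norm_num) (by rw [hcard]; norm_num)

theorem isMulCommutative_sylow_three {G : Type*} [Group G] [Finite G] (hcard : Nat.card G = 360)
    (P : Sylow 3 G) : IsMulCommutative P :=
  IsPGroup.isMulCommutative_of_card_eq_prime_sq (p := 3) (card_sylow_three_eq_nine hcard P)

namespace IsMathieuBounded

variable {G : Type*} [Group G] [Finite G]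

theorem card_sylow_five_of_not_isSolvable (hG : IsMathieuBounded G) (hsol : ¬ Group.IsSolvable G) :
    (Nat.card (Sylow 5 G) = 6 ∧ (Nat.card G = 60 ∨ Nat.card G = 120)) ∨
      (Nat.card (Sylow 5 G) = 36 ∧ Nat.card G = 360) := by
  have h5 : 5 ∣ Nat.card G := by
    by_contra h5
    exact hsol (isSolvable_of_card_dvd_eight_mul_three_pow (n := 2) (hG.card_dvd_seventy_two h5))
  refine (hG.card_sylow_five_cases h5).resolve_left fun ⟨hn, hdvd⟩ => hsol ?_
  obtain ⟨P⟩ : Nonempty (Sylow 5 G) := inferInstance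
  have hN : (P : Subgroup G).Normal := by
    rw [← Subgroup.normalizer_eq_top_iff, ← Subgroup.index_eq_one]
    exact P.card_eq_index_normalizer ▸ hn
  have hP := hG.card_sylow_five h5 P
  have hmul := (P : Subgroup G).card_mul_index
  rw [hP] at hmul
  exact isSolvable_of_card_dvd_of_index_dvd (P : Subgroup G) (m := 1) (n := 2) Nat.prime_five
    Nat.prime_two hP.dvd (Nat.dvd_of_mul_dvd_mul_left (k := 5) (by norm_num) (hmul ▸ hdvd))

theorem isSimpleGroup_of_card_eq (hG : IsMathieuBounded G) (hcard : Nat.card G = 360) :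
    IsSimpleGroup G := by
  refine hG.isSimpleGroup (.inr ⟨?_, hcard⟩)
  rcases hG.card_sylow_five_cases (by rw [hcard]; norm_num) with ⟨-, h⟩ | ⟨-, h⟩ | ⟨h, -⟩
  · exact absurd (hcard ▸ h) (by norm_num)
  · omega
  · exact h

theorem eq_top_of_sixty_lt (hG : IsMathieuBounded G) (hcard : Nat.card G = 360) (K : Subgroup G)
    (hK : 60 < Nat.card K) : K = ⊤ := by
  have := hG.isSimpleGroup_of_card_eq hcard
  refine eq_top_of_factorial_index_lt K ?_
  have hmul := K.card_mul_index
  have hle : K.index ≤ 5 := by nlinarith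
  exact (Nat.factorial_le hle).trans_lt (by rw [hcard]; decide)

theorem orderOf_eq_three (hG : IsMathieuBounded G) (hcard : Nat.card G = 360) (P : Sylow 3 G)
    {x : G} (hx : x ∈ P) (hx1 : x ≠ 1) : orderOf x = 3 := by
  have hdvd : orderOf x ∣ 3 ^ 2 := (Subgroup.orderOf_dvd_natCard (P : Subgroup G) hx).trans
    (card_sylow_three_eq_nine hcard P).dvd
  obtain ⟨k, hk, hxk⟩ := (Nat.dvd_prime_pow Nat.prime_three).1 hdvd
  have hle := hG.orderOf_le_six x
  have hne := mt orderOf_eq_one_iff.1 hx1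
  interval_cases k <;> omega

theorem card_sylow_three_eq_ten (hG : IsMathieuBounded G) (hcard : Nat.card G = 360) :
    Nat.card (Sylow 3 G) = 10 := by
  obtain ⟨P⟩ : Nonempty (Sylow 3 G) := inferInstance
  have := hG.isSimpleGroup_of_card_eq hcard
  have hP := card_sylow_three_eq_nine hcard P
  have := isMulCommutative_sylow_three hcard P
  have hmul := (P : Subgroup G).card_mul_index
  rw [hP, hcard] at hmul
  have hdvd : Nat.card (Sylow 3 G) ∣ 40 := by
    rw [show 40 = (P : Subgroup G).index by omega]
    exact P.card_dvd_index
  have hmod : Nat.card (Sylow 3 G) ≡ 1 [MOD 3] := card_sylow_modEq_one 3 G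
  have hcases : ∀ n ∈ Nat.divisors 40, n ≡ 1 [MOD 3] → n ≤ 4 ∨ n = 10 ∨ n = 40 := by decide
  have hne (K : Subgroup G) (hK : K.Normal) (h1 : 1 < Nat.card K) (h360 : Nat.card K < 360) :
      False := by
    rcases hK.eq_bot_or_eq_top with rfl | rfl
    · exact absurd h1 (by simp)
    · exact absurd h360 (by simp [hcard])
  rcases hcases _ (Nat.mem_divisors.2 ⟨hdvd, by norm_num⟩) hmod with h4 | h10 | h40
  · have hN := eq_top_of_factorial_index_lt (Subgroup.normalizer (P : Set G)) <| by
      rw [← P.card_eq_index_normalizer, hcard]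
      exact (Nat.factorial_le h4).trans_lt (by decide)
    exact (hne P (Subgroup.normalizer_eq_top_iff.1 hN) (by omega) (by omega)).elim
  · exact h10
  · obtain ⟨K, hK, -, hKcard⟩ := exists_normal_card_mul_card_eq P (by rw [hP, h40, hcard])
    rw [hP, hcard] at hKcard
    exact (hne K hK (by omega) (by omega)).elim

theorem card_centralizer_eq_thirty_six (hG : IsMathieuBounded G) (hcard : Nat.card G = 360)
    {P Q : Sylow 3 G} (hPQ : P ≠ Q) {x : G} (hxP : x ∈ P) (hxQ : x ∈ Q) (hx : x ≠ 1) :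
    Nat.card (Subgroup.centralizer {x}) = 36 ∧
      Nat.card (Sylow 3 (Subgroup.centralizer {x})) = 4 := by
  set C := Subgroup.centralizer {x}
  have hle (R : Sylow 3 G) (hxR : x ∈ R) : (R : Subgroup G) ≤ C := fun y hy =>
    have := isMulCommutative_sylow_three hcard R
    Subgroup.mem_centralizer_singleton_iff.2 (setLike_mul_comm hy hxR)
  have h5 : ¬ 5 ∣ Nat.card C := fun h5 => by
    obtain ⟨y, hy⟩ := exists_prime_orderOf_dvd_card' 5 h5
    refine hx (eq_one_of_commute hG.orderOf_eq_five ((Subgroup.orderOf_coe y).trans hy)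
      (Subgroup.mem_centralizer_singleton_iff.1 y.2) ?_)
    rw [hG.orderOf_eq_three hcard P hxP hx]
    norm_num
  have h72 := (hG.subgroup C).card_dvd_seventy_two h5
  have h60 : Nat.card C ≤ 60 := by
    by_contra! h60
    rw [hG.eq_top_of_sixty_lt hcard C h60, Subgroup.card_top, hcard] at h72
    norm_num at h72
  have hP : Nat.card (P.subtype (hle P hxP)) = 9 :=
    (Nat.card_congr (Subgroup.subgroupOfEquivOfLe (hle P hxP)).toEquiv).trans
      (card_sylow_three_eq_nine hcard P)
  have hmod : Nat.card (Sylow 3 C) ≡ 1 [MOD 3] := card_sylow_modEq_one 3 C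
  have hone : 1 < Nat.card (Sylow 3 C) := Finite.one_lt_card_iff_nontrivial.2
    ⟨P.subtype (hle P hxP), Q.subtype (hle Q hxQ), fun h => hPQ (Sylow.subtype_injective h)⟩
  have hmul := (P.subtype (hle P hxP) : Subgroup C).card_mul_index
  have hdvd := (P.subtype (hle P hxP)).card_dvd_index
  rw [hP] at hmul
  rw [← hmul] at h72 h60 ⊢
  have hi := Nat.dvd_of_mul_dvd_mul_left (k := 9) (m := _) (n := 8) (by norm_num) h72
  have harith : ∀ i ∈ Nat.divisors 8, ∀ n ∈ Nat.divisors i, n ≡ 1 [MOD 3] → 1 < n →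
      9 * i ≤ 60 → 9 * i = 36 ∧ n = 4 := by decide
  exact harith _ (Nat.mem_divisors.2 ⟨hi, by norm_num⟩) _
    (Nat.mem_divisors.2 ⟨hdvd, Subgroup.index_ne_zero_of_finite⟩) hmod hone h60

-- Otherwise the centralizer of `x` has order `36` and, by Burnside's transfer theorem, a normal
-- subgroup of order `4`, whose normalizer is then too large for a simple group of order `360`.
theorem eq_of_mem_sylow_three (hG : IsMathieuBounded G) (hcard : Nat.card G = 360)
    {P Q : Sylow 3 G} {x : G} (hxP : x ∈ P) (hxQ : x ∈ Q) (hx : x ≠ 1) : P = Q := by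
  have := hG.isSimpleGroup_of_card_eq hcard
  by_contra hPQ
  obtain ⟨hC, hn⟩ := hG.card_centralizer_eq_thirty_six hcard hPQ hxP hxQ hx
  set C := Subgroup.centralizer {x}
  obtain ⟨S⟩ : Nonempty (Sylow 3 C) := inferInstance
  have hS : Nat.card S = 9 := card_sylow_eq_pow (n := 2) S (by rw [hC]; norm_num)
    (by rw [hC]; norm_num)
  have : IsMulCommutative S := IsPGroup.isMulCommutative_of_card_eq_prime_sq (p := 3) hS
  obtain ⟨T, hT, -, hTcard⟩ := exists_normal_card_mul_card_eq S (by rw [hS, hn, hC])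
  rw [hS, hC] at hTcard
  have hT4 : Nat.card (T.map C.subtype) = 4 := by
    rw [Subgroup.card_map_of_injective C.subtype_injective]
    omega
  set N := Subgroup.normalizer (T.map C.subtype : Set G)
  have hCN : C ≤ N := by
    rw [← Subgroup.normal_subgroupOf_iff_le_normalizer (Subgroup.map_subtype_le T),
      Subgroup.subgroupOf, Subgroup.comap_map_eq_self_of_injective C.subtype_injective]
    exact hT
  have h8 : 8 ∣ Nat.card N := Sylow.prime_pow_dvd_card_normalizer (p := 2) (n := 2)
    (by rw [hcard]; norm_num) hT4
  have h36 : 36 ∣ Nat.card N := hC ▸ Subgroup.card_dvd_of_le hCN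
  have hN := hG.eq_top_of_sixty_lt hcard N (by have : 0 < Nat.card N := Nat.card_pos; omega)
  rcases (Subgroup.normalizer_eq_top_iff.1 hN).eq_bot_or_eq_top with h | h
  · rw [h, Subgroup.card_bot] at hT4
    omega
  · rw [h, Subgroup.card_top] at hT4
    omega

end IsMathieuBounded

section Support

variable {α : Type*} [Fintype α] [DecidableEq α] {σ τ : Equiv.Perm α}

theorem four_dvd_card_support (hσ : σ ^ 2 = 1) (hsign : Equiv.Perm.sign σ = 1) :
    4 ∣ σ.support.card := by
  have hcycle := Equiv.Perm.cycleType_of_pow_prime_eq_one hσ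
  rw [← Equiv.Perm.sum_cycleType, hcycle, Multiset.sum_replicate, smul_eq_mul]
  rw [Equiv.Perm.sign_of_cycleType, hcycle, Multiset.sum_replicate, smul_eq_mul,
    Multiset.card_replicate, neg_one_pow_eq_one_iff_even (by decide), Nat.even_iff] at hsign
  omega

theorem dvd_card_support_of_commute {p : ℕ} [Fact p.Prime] (hcomm : Commute σ τ)
    (hτ : τ ^ p = 1) (hmoved : ∀ x ∈ σ.support, τ x ≠ x) : p ∣ σ.support.card := by
  have hmem (x : α) : τ x ∈ σ.support ↔ x ∈ σ.support := by
    have h : σ (τ x) = τ (σ x) := DFunLike.congr_fun hcomm x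
    rw [Equiv.Perm.mem_support, Equiv.Perm.mem_support, h, τ.injective.ne_iff]
  by_contra hp
  obtain ⟨x, hx⟩ := Equiv.Perm.exists_fixed_point_of_prime (n := 1)
    (σ := τ.subtypePerm hmem) (by rwa [Fintype.card_coe]) (by
      rw [pow_one, Equiv.Perm.subtypePerm_pow]
      ext x
      simp [hτ])
  exact hmoved x x.2 (congrArg Subtype.val hx)

end Support

namespace IsMathieuBounded

open MulAction

variable {G : Type*} [Group G] [Finite G]

theorem toPermHom_sylow_three_injective (hG : IsMathieuBounded G) (hcard : Nat.card G = 360) :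
    Function.Injective (toPermHom G (Sylow 3 G)) := by
  have := hG.isSimpleGroup_of_card_eq hcard
  have hn := hG.card_sylow_three_eq_ten hcard
  obtain ⟨P⟩ : Nonempty (Sylow 3 G) := inferInstance
  rw [← MonoidHom.ker_eq_bot_iff]
  refine (IsSimpleGroup.eq_bot_or_eq_top_of_normal _ inferInstance).resolve_right fun hker => ?_
  have hle := ker_toPermHom_sylow_le_normalizer P
  rw [hker, top_le_iff, ← Subgroup.index_eq_one, ← P.card_eq_index_normalizer] at hle
  omega

theorem eq_one_of_smul_eq (hG : IsMathieuBounded G) (hcard : Nat.card G = 360)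
    {P Q : Sylow 3 G} (hPQ : P ≠ Q) {p : G} (hp : p ∈ P) (hpQ : p • Q = Q) : p = 1 := by
  by_contra h1
  refine hPQ (hG.eq_of_mem_sylow_three hcard hp ?_ h1)
  have hz : IsPGroup 3 (Subgroup.zpowers p) :=
    P.isPGroup'.to_le (Subgroup.zpowers_le.2 hp)
  have hmem : p ∈ Subgroup.zpowers p ⊓ Subgroup.normalizer (Q : Set G) :=
    ⟨Subgroup.mem_zpowers p, Sylow.smul_eq_iff_mem_normalizer.1 hpQ⟩
  rw [hz.inf_normalizer_sylow Q] at hmem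
  exact hmem.2

theorem bijective_option_elim_smul (hG : IsMathieuBounded G) (hcard : Nat.card G = 360)
    {P Q : Sylow 3 G} (hPQ : P ≠ Q) :
    Function.Bijective fun v : Option P => v.elim P fun p => (p : G) • Q := by
  have hself (p : P) : (p : G) • P = P :=
    Sylow.smul_eq_iff_mem_normalizer.2 (Subgroup.le_normalizer p.2)
  have hne (p : P) : P ≠ (p : G) • Q := fun h =>
    hPQ (MulAction.injective (p : G) ((hself p).trans h))
  refine (Nat.bijective_iff_injective_and_card _).2 ⟨?_, ?_⟩
  · rintro (_ | p) (_ | q) h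
    · rfl
    · exact (hne q h).elim
    · exact (hne p h.symm).elim
    · have hfix : ((q⁻¹ * p : P) : G) • Q = Q := by
        rw [Subgroup.coe_mul, Subgroup.coe_inv, mul_smul, inv_smul_eq_iff]
        exact h
      have hone := hG.eq_one_of_smul_eq hcard hPQ (q⁻¹ * p).2 hfix
      rw [inv_mul_eq_one.1 (Subtype.ext hone : q⁻¹ * p = 1)]
  · rw [Finite.card_option, hG.card_sylow_three_eq_ten hcard, card_sylow_three_eq_nine hcard P]

theorem exists_mem_smul_eq (hG : IsMathieuBounded G) (hcard : Nat.card G = 360)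
    {P Q R : Sylow 3 G} (hPQ : P ≠ Q) (hPR : P ≠ R) : ∃ p ∈ P, p • Q = R := by
  obtain ⟨_ | p, hp⟩ := (hG.bijective_option_elim_smul hcard hPQ).2 R
  · exact (hPR hp).elim
  · exact ⟨p, p.2, hp⟩

theorem card_stabilizer_sylow_three (hG : IsMathieuBounded G) (hcard : Nat.card G = 360)
    {P Q : Sylow 3 G} (hPQ : P ≠ Q) : Nat.card (stabilizer (stabilizer G P) Q) = 4 := by
  have hN := (stabilizer G P).card_mul_index
  rw [index_stabilizer_of_transitive, hG.card_sylow_three_eq_ten hcard, hcard] at hN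
  have horbit : orbit (stabilizer G P) Q = {P}ᶜ := by
    ext R
    refine ⟨?_, fun hR => ?_⟩
    · rintro ⟨g, rfl⟩ hgP
      exact hPQ (MulAction.injective (g : G) (g.2.trans (Eq.symm hgP)))
    · obtain ⟨p, hp, hpR⟩ := hG.exists_mem_smul_eq hcard hPQ (Ne.symm hR)
      exact ⟨⟨p, Sylow.smul_eq_iff_mem_normalizer.2 (Subgroup.le_normalizer hp)⟩, hpR⟩
  have hD := (stabilizer (stabilizer G P) Q).card_mul_index
  rw [index_stabilizer, horbit, Set.ncard_compl, Set.ncard_singleton,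
    hG.card_sylow_three_eq_ten hcard] at hD
  omega

-- On the ten Sylow `3`-subgroups `t` moves a multiple of `4` points, since it is an even
-- permutation, and a multiple of `3`, since `z` permutes the points moved by `t` freely.
theorem not_commute_of_orderOf_eq_two_of_orderOf_eq_three (hG : IsMathieuBounded G)
    (hcard : Nat.card G = 360) {t z : G} (ht : orderOf t = 2) (hz : orderOf z = 3) :
    ¬ Commute t z := by
  classical
  intro hcomm
  have := Fintype.ofFinite (Sylow 3 G)
  have := hG.isSimpleGroup_of_card_eq hcard
  have hn := hG.card_sylow_three_eq_ten hcard
  rw [Nat.card_eq_fintype_card] at hn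
  let φ := toPermHom G (Sylow 3 G)
  have hφt : orderOf (φ t) = 2 :=
    (orderOf_injective φ (hG.toPermHom_sylow_three_injective hcard) t).trans ht
  have hsign : Equiv.Perm.sign (φ t) = 1 :=
    DFunLike.congr_fun (eq_one_of_isSimpleGroup (by simp [hcard]) (Equiv.Perm.sign.comp φ)) t
  obtain ⟨P, hP⟩ := (IsPGroup.of_card (p := 3) (n := 1)
    (by rw [Nat.card_zpowers, hz, pow_one] : Nat.card (Subgroup.zpowers z) = 3 ^ 1)).exists_le_sylow
  have hzP : z ∈ P := hP (Subgroup.mem_zpowers z)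
  have hz1 : z ≠ 1 := fun h => by simp [h] at hz
  have htP : t • P = P := by
    refine hG.eq_of_mem_sylow_three hcard ?_ hzP hz1
    exact ⟨z, hzP, by simp [hcomm.eq]⟩
  have hmoved : ∀ Q ∈ (φ t).support, φ z Q ≠ Q := fun Q hQ hzQ => by
    refine Equiv.Perm.mem_support.1 hQ ?_
    by_cases hPQ : P = Q
    · exact hPQ ▸ htP
    · exact absurd (hG.eq_one_of_smul_eq hcard hPQ hzP hzQ) hz1
  have h4 := four_dvd_card_support (hφt ▸ pow_orderOf_eq_one (φ t)) hsign
  have h3 := dvd_card_support_of_commute (p := 3) (hcomm.map φ)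
    (by rw [← map_pow, orderOf_dvd_iff_pow_eq_one.1 hz.dvd, map_one]) hmoved
  have hle := (φ t).support.card_le_univ
  have h0 : (φ t).support.card = 0 := by omega
  rw [Finset.card_eq_zero, Equiv.Perm.support_eq_empty_iff] at h0
  simp [h0] at hφt

theorem pow_eq_one (hG : IsMathieuBounded G) (hcard : Nat.card G = 360) (g : G) :
    g ^ 3 = 1 ∨ g ^ 4 = 1 ∨ g ^ 5 = 1 := by
  have h6 : orderOf g ≠ 6 := fun h6 => by
    refine hG.not_commute_of_orderOf_eq_two_of_orderOf_eq_three hcard (t := g ^ 3) (z := g ^ 2)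
      (by rw [orderOf_pow, h6]; rfl) (by rw [orderOf_pow, h6]; rfl) ((Commute.refl g).pow_pow 3 2)
  have hle := hG.orderOf_le_six g
  have hpos := orderOf_pos g
  simp only [← orderOf_dvd_iff_pow_eq_one]
  interval_cases orderOf g <;> omega

theorem conj_eq_inv_of_orderOf_eq_two (hG : IsMathieuBounded G) (hcard : Nat.card G = 360)
    {P : Sylow 3 G} {t p : G} (ht : orderOf t = 2) (htP : t • P = P) (hp : p ∈ P) :
    t * p * t⁻¹ = p⁻¹ := by
  have := isMulCommutative_sylow_three hcard P
  have htp : t * p * t⁻¹ ∈ P :=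
    (Subgroup.mem_normalizer_iff.1 (Sylow.smul_eq_iff_mem_normalizer.1 htP) p).1 hp
  have htt : t * t = 1 := by rw [← sq, ← ht, pow_orderOf_eq_one]
  have hcomm : Commute t (t * p * t⁻¹ * p) := by
    refine mul_inv_eq_iff_eq_mul.1 ?_
    calc t * (t * p * t⁻¹ * p) * t⁻¹ = t * t * p * t⁻¹ * p * t⁻¹ := by group
      _ = p * (t * p * t⁻¹) := by
        rw [htt, inv_eq_of_mul_eq_one_left htt]
        group
      _ = t * p * t⁻¹ * p := setLike_mul_comm hp htp
  by_contra hne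
  refine hG.not_commute_of_orderOf_eq_two_of_orderOf_eq_three hcard ht ?_ hcomm
  exact hG.orderOf_eq_three hcard P (mul_mem htp hp) fun h => hne (eq_inv_of_mul_eq_one_left h)

end IsMathieuBounded

/-! ### The projective line over `𝔽₉` -/

/-- The field `𝔽₉ = 𝔽₃(i)`, with `(a, b)` standing for `a + b i`; only its additive structure is
used as such. Accordingly `Option F9` is the projective line over it, with `none` for `∞`. -/
abbrev F9 : Type := ZMod 3 × ZMod 3

/-- The permutation `z ↦ v + z` of the projective line over `𝔽₉`. -/
def translation (v : F9) : Equiv.Perm (Option F9) := (Equiv.addLeft v).optionCongr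

/-- Multiplication by `i` on `𝔽₉`. -/
def mulI : F9 ≃ F9 where
  toFun v := (-v.2, v.1)
  invFun v := (v.2, -v.1)
  left_inv v := by simp
  right_inv v := by simp

/-- The permutation `z ↦ i z` of the projective line over `𝔽₉`. -/
def rotation : Equiv.Perm (Option F9) := mulI.optionCongr

/-- The map `z ↦ 1 / z` on the projective line over `𝔽₉`: the inverse of `a + b i` is
`(a² + b²)⁻¹ (a - b i)`, and the nonzero elements of `𝔽₃` are their own inverses. -/
def reciprocal : Option F9 → Option F9
  | none => some 0
  | some (a, b) => if a = 0 ∧ b = 0 then none else some ((a ^ 2 + b ^ 2) * a, -(a ^ 2 + b ^ 2) * b)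

theorem reciprocal_reciprocal : ∀ z, reciprocal (reciprocal z) = z := by decide +kernel

/-- The permutation `z ↦ 1 / z` of the projective line over `𝔽₉`. -/
def inversion : Equiv.Perm (Option F9) :=
  Function.Involutive.toPerm reciprocal reciprocal_reciprocal

/-- The group `PSL₂(9)` as a group of permutations of the projective line over `𝔽₉`. -/
def projectiveGroup : Subgroup (Equiv.Perm (Option F9)) :=
  Subgroup.closure (Set.range translation ∪ {rotation, inversion})

/-- The map `w` of the projective line that exchanges `0` and `∞`, sends `1` to `x` and `1 + i`
to `y`, and satisfies `w (i z) = r (w z)` away from `0` and `∞`. Row `a` and column `b` of the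
matrix hold its value at `a + b i`. -/
def swapTable (r : Equiv.Perm (Option F9)) (x y : Option F9) : Option F9 → Option F9
  | none => some 0
  | some (a, b) =>
    ![![none, r x, r (r (r x))], ![x, y, r (r (r y))], ![r (r x), r y, r (r y)]] a b

theorem eq_swapTable {r w : Equiv.Perm (Option F9)} (hinf : w none = some 0)
    (hzero : w (some 0) = none) (hw : w * rotation = r * w) :
    ⇑w = swapTable r (w (some (1, 0))) (w (some (1, 1))) := by
  have hstep (z : Option F9) : w (rotation z) = r (w z) := DFunLike.congr_fun hw z
  have hx₁ : w (some (0, 1)) = r (w (some (1, 0))) := hstep (some (1, 0))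
  have hx₂ : w (some (2, 0)) = r (w (some (0, 1))) := hstep (some (0, 1))
  have hx₃ : w (some (0, 2)) = r (w (some (2, 0))) := hstep (some (2, 0))
  have hy₁ : w (some (2, 1)) = r (w (some (1, 1))) := hstep (some (1, 1))
  have hy₂ : w (some (2, 2)) = r (w (some (2, 1))) := hstep (some (2, 1))
  have hy₃ : w (some (1, 2)) = r (w (some (2, 2))) := hstep (some (2, 2))
  rw [hx₁] at hx₂
  rw [hx₂] at hx₃
  rw [hy₁] at hy₂
  rw [hy₂] at hy₃
  funext z
  rcases z with _ | ⟨a, b⟩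
  · exact hinf
  · fin_cases a <;> fin_cases b <;> first | rfl | assumption

theorem exists_swapTable_eq_inversion {r : Equiv.Perm (Option F9)}
    (hr : r = rotation ∨ r = rotation⁻¹) :
    ∀ x y : Option F9,
      (∀ v, (∀ z, (translation v ∘ swapTable r x y)^[3] z = z) ∨
        (∀ z, (translation v ∘ swapTable r x y)^[4] z = z) ∨
          ∀ z, (translation v ∘ swapTable r x y)^[5] z = z) →
      ∃ k : Fin 4, ∀ z, swapTable r x y (rotation^[k] z) = inversion z := by
  rcases hr with rfl | rfl <;> decide +kernel

theorem exists_mul_rotation_pow_eq_inversion {r w : Equiv.Perm (Option F9)}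
    (hinf : w none = some 0) (hzero : w (some 0) = none)
    (hr : r = rotation ∨ r = rotation⁻¹) (hw : w * rotation = r * w)
    (hpow : ∀ v, (translation v * w) ^ 3 = 1 ∨ (translation v * w) ^ 4 = 1 ∨
      (translation v * w) ^ 5 = 1) :
    ∃ k : ℕ, w * rotation ^ k = inversion := by
  have htable := eq_swapTable hinf hzero hw
  have hiterate (v : F9) {n : ℕ} (h : (translation v * w) ^ n = 1) (z : Option F9) :
      (translation v ∘ swapTable r (w (some (1, 0))) (w (some (1, 1))))^[n] z = z := by
    rw [← htable, ← Equiv.Perm.coe_mul, Equiv.Perm.iterate_eq_pow, h, Equiv.Perm.one_apply]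
  obtain ⟨k, hk⟩ := exists_swapTable_eq_inversion hr _ _ fun v =>
    (hpow v).imp (hiterate v) (Or.imp (hiterate v) (hiterate v))
  refine ⟨k, Equiv.ext fun z => ?_⟩
  rw [Equiv.Perm.mul_apply, ← Equiv.Perm.iterate_eq_pow, htable, hk]

theorem eq_zero_of_sq_add_sq_eq_zero :
    ∀ {a b : ZMod 3}, a ^ 2 + b ^ 2 = 0 → a = 0 ∧ b = 0 := by
  decide

theorem exists_addEquiv_mulI {A : Type*} [AddCommGroup A] (hA : Nat.card A = 9)
    (hthree : ∀ x : A, 3 • x = 0) (σ : A →+ A) (hσ : ∀ x, σ (σ x) = -x) :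
    ∃ θ : F9 ≃+ A, ∀ v, θ (mulI v) = σ (θ v) := by
  let _ : Module (ZMod 3) A := AddCommGroup.zmodModule hthree
  have : Finite A := Nat.finite_of_card_ne_zero (by omega)
  have : Nontrivial A := Finite.one_lt_card_iff_nontrivial.1 (by omega)
  obtain ⟨x, hx⟩ := exists_ne (0 : A)
  let τ : A →ₗ[ZMod 3] A := σ.toZModLinearMap 3
  have hτ (y : A) : τ (τ y) = -y := hσ y
  let f : F9 →ₗ[ZMod 3] A :=
    (LinearMap.toSpanSingleton _ _ x).coprod (LinearMap.toSpanSingleton _ _ (τ x))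
  have hf (v : F9) : f v = v.1 • x + v.2 • τ x := rfl
  have hinj : Function.Injective f := by
    refine (injective_iff_map_eq_zero f).2 fun v hv => ?_
    have hτv : v.1 • τ x - v.2 • x = 0 := by
      have h := congrArg τ hv
      rwa [hf, map_add, map_smul, map_smul, hτ, smul_neg, ← sub_eq_add_neg, map_zero] at h
    have hnorm : (v.1 ^ 2 + v.2 ^ 2) • x = 0 := by
      calc (v.1 ^ 2 + v.2 ^ 2) • x
          = v.1 • (v.1 • x + v.2 • τ x) - v.2 • (v.1 • τ x - v.2 • x) := by module
        _ = 0 := by rw [← hf, hv, hτv, smul_zero, smul_zero, sub_zero]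
    exact Prod.ext_iff.2 <|
      eq_zero_of_sq_add_sq_eq_zero ((smul_eq_zero.1 hnorm).resolve_right hx)
  have hbij : Function.Bijective f :=
    (Nat.bijective_iff_injective_and_card f).2 ⟨hinj, by simp [hA]⟩
  refine ⟨(LinearEquiv.ofBijective f hbij).toAddEquiv, fun v => ?_⟩
  change f (mulI v) = τ (f v)
  rw [hf, hf, map_add, map_smul, map_smul, hτ, smul_neg, add_comm, ← neg_smul]
  rfl

theorem eq_or_eq_inv_of_orderOf_eq_four {D : Type*} [Group D] (hD : Nat.card D = 4)
    {c d : D} (hc : orderOf c = 4) (hd : orderOf d = 4) : d = c ∨ d = c⁻¹ := by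
  classical
  have : Finite D := Nat.finite_of_card_ne_zero (by omega)
  have htop : Subgroup.zpowers c = ⊤ := Subgroup.eq_top_of_card_eq _ (by
    rw [Nat.card_zpowers, hc, hD])
  have hmem : d ∈ Subgroup.zpowers c := htop ▸ Subgroup.mem_top d
  rw [mem_zpowers_iff_mem_range_orderOf, hc, Finset.mem_image] at hmem
  obtain ⟨k, hk, rfl⟩ := hmem
  have h3 : c ^ 3 = c⁻¹ := eq_inv_of_mul_eq_one_left (by
    rw [← pow_succ]
    exact orderOf_dvd_iff_pow_eq_one.1 hc.dvd)
  rw [orderOf_pow, hc] at hd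
  have hk4 := Finset.mem_range.1 hk
  interval_cases k
  · simp at hd
  · exact Or.inl (pow_one c)
  · simp at hd
  · exact Or.inr h3

theorem isMathieuBounded_alternatingGroup_six : IsMathieuBounded (alternatingGroup (Fin 6)) where
  orderOf_le_six s := by
    rw [← Subgroup.orderOf_coe]
    exact orderOf_perm_fin_six_le s
  card_dvd := by rw [card_alternatingGroup_six]

theorem translation_injective : Function.Injective translation := fun u v h => by
  have h0 : some (u + 0) = some (v + 0) := DFunLike.congr_fun h (some 0)
  simpa using h0

theorem sixty_lt_card_projectiveGroup : 60 < Nat.card projectiveGroup := by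
  have htrans (v : F9) : translation v ∈ projectiveGroup :=
    Subgroup.subset_closure (Or.inl ⟨v, rfl⟩)
  have hinv : inversion ∈ projectiveGroup := Subgroup.subset_closure (Or.inr (Or.inr rfl))
  let f (v : F9 × F9) : projectiveGroup :=
    ⟨translation v.1 * inversion * translation v.2, mul_mem (mul_mem (htrans _) hinv) (htrans _)⟩
  have hf : Function.Injective f := fun u v huv => by
    have h : translation u.1 * inversion * translation u.2 =
        translation v.1 * inversion * translation v.2 := congrArg Subtype.val huv
    have hinf : some (u.1 + 0) = some (v.1 + 0) := DFunLike.congr_fun h none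
    have h1 : u.1 = v.1 := by simpa using hinf
    rw [h1] at h
    exact Prod.ext h1 (translation_injective (mul_left_cancel h))
  calc 60 < Nat.card (F9 × F9) := by simp
    _ ≤ Nat.card projectiveGroup := Nat.card_le_card_of_injective f hf

namespace IsMathieuBounded

open MulAction

variable {G : Type*} [Group G] [Finite G]

theorem eq_one_of_forall_commute (hG : IsMathieuBounded G) (hcard : Nat.card G = 360)
    {P Q : Sylow 3 G} (hPQ : P ≠ Q) {d : G} (hdP : d • P = P) (hdQ : d • Q = Q)
    (hcomm : ∀ p ∈ P, Commute d p) : d = 1 := by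
  refine hG.toPermHom_sylow_three_injective hcard (Equiv.ext fun R => ?_)
  rw [map_one, Equiv.Perm.one_apply, toPermHom_apply, toPerm_apply]
  by_cases hPR : P = R
  · exact hPR ▸ hdP
  · obtain ⟨p, hp, rfl⟩ := hG.exists_mem_smul_eq hcard hPQ hPR
    rw [← mul_smul, (hcomm p hp).eq, mul_smul, hdQ]

theorem eq_of_orderOf_eq_two (hG : IsMathieuBounded G) (hcard : Nat.card G = 360)
    {P Q : Sylow 3 G} (hPQ : P ≠ Q) {s t : G} (hs : orderOf s = 2) (ht : orderOf t = 2)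
    (hsP : s • P = P) (hsQ : s • Q = Q) (htP : t • P = P) (htQ : t • Q = Q) : s = t := by
  have hst : s * t = 1 := by
    refine hG.eq_one_of_forall_commute hcard hPQ (by rw [mul_smul, htP, hsP])
      (by rw [mul_smul, htQ, hsQ]) fun p hp => mul_inv_eq_iff_eq_mul.1 ?_
    calc s * t * p * (s * t)⁻¹ = s * (t * p * t⁻¹) * s⁻¹ := by group
      _ = p := by
        rw [hG.conj_eq_inv_of_orderOf_eq_two hcard ht htP hp,
          hG.conj_eq_inv_of_orderOf_eq_two hcard hs hsP (inv_mem hp), inv_inv]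
  have htt : t * t = 1 := by rw [← sq, ← ht, pow_orderOf_eq_one]
  exact mul_right_cancel (hst.trans htt.symm)

theorem exists_orderOf_eq_four (hG : IsMathieuBounded G) (hcard : Nat.card G = 360)
    {P Q : Sylow 3 G} (hPQ : P ≠ Q) : ∃ c : G, orderOf c = 4 ∧ c • P = P ∧ c • Q = Q := by
  have := Fintype.ofFinite (stabilizer (stabilizer G P) Q)
  have hD := hG.card_stabilizer_sylow_three hcard hPQ
  by_contra! hfour
  have htwo (d : stabilizer (stabilizer G P) Q) (hd : d ≠ 1) : orderOf ((d : _) : G) = 2 := by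
    have hdvd : orderOf d ∣ 4 := hD ▸ orderOf_dvd_natCard d
    have hne : orderOf d ≠ 4 := fun h =>
      hfour d (by rw [Subgroup.orderOf_coe, Subgroup.orderOf_coe, h]) d.1.2
        (mem_stabilizer_iff.1 d.2)
    have hle := Nat.le_of_dvd (by omega) hdvd
    have h1 : orderOf d ≠ 1 := orderOf_eq_one_iff.not.2 hd
    rw [Subgroup.orderOf_coe, Subgroup.orderOf_coe]
    interval_cases orderOf d <;> omega
  have hcardD : 2 < Fintype.card (stabilizer (stabilizer G P) Q) := by
    rw [← Nat.card_eq_fintype_card, hD]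
    omega
  obtain ⟨x, y, z, hxy, hxz, hyz⟩ := Fintype.two_lt_card_iff.1 hcardD
  have h := hG.eq_of_orderOf_eq_two hcard hPQ (htwo (x⁻¹ * y) (inv_mul_eq_one.not.2 hxy))
    (htwo (x⁻¹ * z) (inv_mul_eq_one.not.2 hxz)) (x⁻¹ * y).1.2 (x⁻¹ * y).2 (x⁻¹ * z).1.2 (x⁻¹ * z).2
  exact hyz (mul_left_cancel (Subtype.ext (Subtype.ext h)))

theorem eq_or_eq_inv_of_smul_eq (hG : IsMathieuBounded G) (hcard : Nat.card G = 360)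
    {P Q : Sylow 3 G} (hPQ : P ≠ Q) {c d : G} (hc : orderOf c = 4) (hcP : c • P = P)
    (hcQ : c • Q = Q) (hd : orderOf d = 4) (hdP : d • P = P) (hdQ : d • Q = Q) :
    d = c ∨ d = c⁻¹ := by
  let c' : stabilizer (stabilizer G P) Q := ⟨⟨c, hcP⟩, hcQ⟩
  let d' : stabilizer (stabilizer G P) Q := ⟨⟨d, hdP⟩, hdQ⟩
  have hc' : orderOf c' = 4 := by rwa [← Subgroup.orderOf_coe, ← Subgroup.orderOf_coe]
  have hd' : orderOf d' = 4 := by rwa [← Subgroup.orderOf_coe, ← Subgroup.orderOf_coe]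
  have hD := hG.card_stabilizer_sylow_three hcard hPQ
  rcases eq_or_eq_inv_of_orderOf_eq_four hD hc' hd' with h | h
  · exact Or.inl (Subtype.ext_iff.1 (Subtype.ext_iff.1 h))
  · exact Or.inr (Subtype.ext_iff.1 (Subtype.ext_iff.1 h))

theorem conj_eq_or_eq_inv (hG : IsMathieuBounded G) (hcard : Nat.card G = 360)
    {P Q : Sylow 3 G} (hPQ : P ≠ Q) {c w : G} (hc : orderOf c = 4) (hcP : c • P = P)
    (hcQ : c • Q = Q) (hwP : w • P = Q) (hwQ : w • Q = P) :
    w * c * w⁻¹ = c ∨ w * c * w⁻¹ = c⁻¹ := by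
  refine hG.eq_or_eq_inv_of_smul_eq hcard hPQ hc hcP hcQ ?_ ?_ ?_
  · rw [← MulAut.conj_apply, MulEquiv.orderOf_eq, hc]
  · rw [mul_smul, mul_smul, inv_smul_eq_iff.2 hwQ.symm, hcQ, hwQ]
  · rw [mul_smul, mul_smul, inv_smul_eq_iff.2 hwP.symm, hcP, hwP]

theorem exists_smul_eq_and_smul_eq (hG : IsMathieuBounded G) (hcard : Nat.card G = 360)
    {P Q : Sylow 3 G} (hPQ : P ≠ Q) : ∃ w : G, w • P = Q ∧ w • Q = P := by
  obtain ⟨h, rfl⟩ := exists_smul_eq G P Q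
  obtain ⟨q, hq, hqP⟩ := hG.exists_mem_smul_eq hcard (P := h • P) (Q := h • h • P) (R := P)
    (fun hne => hPQ (MulAction.injective h hne)) hPQ.symm
  refine ⟨q * h, ?_, by rw [mul_smul, hqP]⟩
  rw [mul_smul]
  exact Sylow.smul_eq_iff_mem_normalizer.2 (Subgroup.le_normalizer hq)

open scoped IsMulCommutative in
theorem exists_addEquiv_additive_sylow_three (hG : IsMathieuBounded G) (hcard : Nat.card G = 360)
    {P : Sylow 3 G} {c : G} (hc : orderOf c = 4) (hcP : c • P = P) :
    ∃ θ : F9 ≃+ Additive P, ∀ v, c * (θ v).toMul * c⁻¹ = ((θ (mulI v)).toMul : G) := by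
  have := isMulCommutative_sylow_three hcard P
  let σ : P →* P := P.normalizerMonoidHom ⟨c, Sylow.smul_eq_iff_mem_normalizer.1 hcP⟩
  have hσ (p : P) : (σ p : G) = c * p * c⁻¹ := rfl
  have hsq : orderOf (c ^ 2) = 2 := by rw [orderOf_pow, hc]; rfl
  have hsqP : c ^ 2 • P = P := by rw [sq, mul_smul, hcP, hcP]
  have hσσ (p : P) : σ (σ p) = p⁻¹ := Subtype.ext <| by
    rw [hσ, hσ, Subgroup.coe_inv, ← hG.conj_eq_inv_of_orderOf_eq_two hcard hsq hsqP p.2, sq]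
    group
  have hthree (p : P) : p ^ 3 = 1 := by
    by_cases hp : p = 1
    · rw [hp, one_pow]
    · refine Subtype.ext (orderOf_dvd_iff_pow_eq_one.1 ?_)
      exact (hG.orderOf_eq_three hcard P p.2 fun h => hp (Subtype.ext h)).dvd
  obtain ⟨θ, hθ⟩ := exists_addEquiv_mulI (A := Additive P) (card_sylow_three_eq_nine hcard P)
    hthree σ.toAdditive hσσ
  refine ⟨θ, fun v => ?_⟩
  rw [hθ]
  rfl

theorem exists_coordinates (hG : IsMathieuBounded G) (hcard : Nat.card G = 360)
    {P Q : Sylow 3 G} (hPQ : P ≠ Q) {c : G} (hc : orderOf c = 4) (hcP : c • P = P)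
    (hcQ : c • Q = Q) :
    ∃ e : Option F9 ≃ Sylow 3 G, e none = P ∧ e (some 0) = Q ∧
      (∀ v, ∃ g : G, ∀ z, e (translation v z) = g • e z) ∧ ∀ z, e (rotation z) = c • e z := by
  obtain ⟨θ, hθ⟩ := hG.exists_addEquiv_additive_sylow_three hcard hc hcP
  let e : Option F9 ≃ Sylow 3 G := (θ.toEquiv.trans Additive.toMul).optionCongr.trans <|
    Equiv.ofBijective _ (hG.bijective_option_elim_smul hcard hPQ)
  have hsome (v : F9) : e (some v) = ((θ v).toMul : G) • Q := rfl
  refine ⟨e, rfl, ?_, fun v => ⟨(θ v).toMul, ?_⟩, ?_⟩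
  · rw [hsome, map_zero, toMul_zero, Subgroup.coe_one, one_smul]
  · rintro (_ | u)
    · exact (Sylow.smul_eq_iff_mem_normalizer.2 (Subgroup.le_normalizer (θ v).toMul.2)).symm
    · change e (some (v + u)) = _
      rw [hsome, hsome, map_add, toMul_add, Subgroup.coe_mul, mul_smul]
  · rintro (_ | u)
    · exact hcP.symm
    · change e (some (mulI u)) = _
      rw [hsome, hsome, ← hθ, mul_smul, mul_smul, inv_smul_eq_iff.2 hcQ.symm]

theorem exists_injective_perm_option (hG : IsMathieuBounded G) (hcard : Nat.card G = 360) :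
    ∃ φ : G →* Equiv.Perm (Option F9), Function.Injective φ ∧ projectiveGroup ≤ φ.range := by
  have : Nontrivial (Sylow 3 G) :=
    Finite.one_lt_card_iff_nontrivial.1 (by rw [hG.card_sylow_three_eq_ten hcard]; omega)
  obtain ⟨P, Q, hPQ⟩ := exists_pair_ne (Sylow 3 G)
  obtain ⟨c, hc, hcP, hcQ⟩ := hG.exists_orderOf_eq_four hcard hPQ
  obtain ⟨w, hwP, hwQ⟩ := hG.exists_smul_eq_and_smul_eq hcard hPQ
  obtain ⟨e, henone, hezero, hetrans, herot⟩ := hG.exists_coordinates hcard hPQ hc hcP hcQ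
  let φ : G →* Equiv.Perm (Option F9) :=
    e.symm.permCongrHom.toMonoidHom.comp (toPermHom G (Sylow 3 G))
  have hφ (g : G) (z : Option F9) : φ g z = e.symm (g • e z) := rfl
  have htrans (v : F9) : ∃ g : G, φ g = translation v :=
    (hetrans v).imp fun g hg => Equiv.ext fun z => by rw [hφ, ← hg, e.symm_apply_apply]
  have hrot : φ c = rotation := Equiv.ext fun z => by rw [hφ, ← herot, e.symm_apply_apply]
  have hconj : φ w * rotation = φ (w * c * w⁻¹) * φ w := by
    rw [← hrot, ← map_mul, ← map_mul, inv_mul_cancel_right]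
  have hr : φ (w * c * w⁻¹) = rotation ∨ φ (w * c * w⁻¹) = rotation⁻¹ := by
    rw [← hrot, ← map_inv]
    exact (hG.conj_eq_or_eq_inv hcard hPQ hc hcP hcQ hwP hwQ).imp (congrArg φ) (congrArg φ)
  obtain ⟨k, hk⟩ := exists_mul_rotation_pow_eq_inversion
    (by rw [hφ, henone, hwP, ← hezero, e.symm_apply_apply])
    (by rw [hφ, hezero, hwQ, ← henone, e.symm_apply_apply]) hr hconj fun v => by
      obtain ⟨g, hg⟩ := htrans v
      simp only [← hg, ← map_mul, ← map_pow]
      exact (hG.pow_eq_one hcard (g * w)).imp (fun h => by rw [h, map_one])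
        (Or.imp (fun h => by rw [h, map_one]) fun h => by rw [h, map_one])
  refine ⟨φ, (e.symm.permCongrHom.injective).comp (hG.toPermHom_sylow_three_injective hcard),
    (Subgroup.closure_le _).2 (Set.union_subset (Set.range_subset_iff.2 htrans) ?_)⟩
  rintro _ (rfl | rfl)
  · exact ⟨c, hrot⟩
  · exact ⟨w * c ^ k, by rw [map_mul, map_pow, hrot, hk]⟩

theorem nonempty_mulEquiv_projectiveGroup (hG : IsMathieuBounded G) (hcard : Nat.card G = 360) :
    Nonempty (G ≃* projectiveGroup) := by
  obtain ⟨φ, hφ, hle⟩ := hG.exists_injective_perm_option hcard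
  have htop : projectiveGroup.comap φ = ⊤ := hG.eq_top_of_sixty_lt hcard _ <| by
    rw [Nat.card_congr ((projectiveGroup.comap φ).equivMapOfInjective φ hφ).toEquiv,
      Subgroup.map_comap_eq_self hle]
    exact sixty_lt_card_projectiveGroup
  have hrange : φ.range = projectiveGroup := by
    rw [MonoidHom.range_eq_map, ← htop, Subgroup.map_comap_eq_self hle]
  exact ⟨(MonoidHom.ofInjective hφ).trans (MulEquiv.subgroupCongr hrange)⟩

theorem nonempty_mulEquiv_alternatingGroup_six (hG : IsMathieuBounded G)
    (hcard : Nat.card G = 360) : Nonempty (G ≃* alternatingGroup (Fin 6)) := by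
  obtain ⟨φ⟩ := hG.nonempty_mulEquiv_projectiveGroup hcard
  obtain ⟨ψ⟩ := isMathieuBounded_alternatingGroup_six.nonempty_mulEquiv_projectiveGroup
    card_alternatingGroup_six
  exact ⟨φ.trans ψ.symm⟩

end IsMathieuBounded

end SmallMathieu

/-- A non-solvable finite group satisfying Condition (4) is isomorphic to `A₅`, `S₅` or `A₆`. -/
theorem nonsolvable_of_condition4 (G : Type*) [Group G] [Fintype G] (h : Condition4 G)
    (hns : ¬ IsSolvable G) :
    Nonempty (G ≃* alternatingGroup (Fin 5)) ∨
      Nonempty (G ≃* Equiv.Perm (Fin 5)) ∨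
        Nonempty (G ≃* alternatingGroup (Fin 6)) := by
  have hG := SmallMathieu.isMathieuBounded_of_condition4 h
  rcases hG.card_sylow_five_of_not_isSolvable hns with ⟨hn, hcard | hcard⟩ | ⟨-, hcard⟩
  · exact Or.inl (hG.nonempty_mulEquiv_alternatingGroup_five hn hcard)
  · exact Or.inr (Or.inl (hG.nonempty_mulEquiv_perm_five hn hcard))
  · exact Or.inr (Or.inr (hG.nonempty_mulEquiv_alternatingGroup_six hcard))
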